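/- Let λ=(λ_1,...,λ_l) be a partition of length l, let ξ_μ ∈ ℂ be arbitrary scalars for partitions μ with λ < μ, let τ(t) = s_λ(t) + Σ_{λ<μ} ξ_μ s_μ(t), and for 0 ≤ k ≤ l let τ^{(k)}(t) = s_{(λ_1,...,λ_k)}(t) + Σ_μ ξ_μ s_{(μ_1,...,μ_k)}(t), the sum over partitions μ=(μ_1,...,μ_l) with λ < μ and μ_i = λ_i for k+1 ≤ i ≤ l. Then ∂_1^{N_{λ,k}} τ(t) evaluated at t = [x_1]+⋯+[x_k] equals c'_{λ,k} · τ^{(k)}([x_1]+⋯+[x_k]) as formal power series in x_1,...,x_k, where c'_{λ,k} = (N_{λ,k}! / Π_{i=1}^{l−k} w_i!) · Π_{1≤i<j≤l−k}(w_j−w_i) with (w_l,...,w_1) = (λ_1,...,λ_l)+(l−1,...,1,0). -/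

import Mathlib

open MvPolynomial

noncomputable def pS (n : ℕ) : MvPolynomial ℕ ℂ :=
  ∑ m ∈ Finset.range (n + 1), (Nat.factorial m : ℂ)⁻¹ •
    ∑ c ∈ Finset.univ.filter
        (fun c : Fin m → Fin (n + 1) =>
          (∑ j, ((c j : ℕ))) = n ∧ ∀ j, 1 ≤ (c j : ℕ)),
      ∏ j, X ((c j : ℕ))

noncomputable def pz (n : ℤ) : MvPolynomial ℕ ℂ :=
  if 0 ≤ n then pS n.toNat else 0

noncomputable def schur {l : ℕ} (lam : Fin l → ℕ) : MvPolynomial ℕ ℂ :=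
  Matrix.det (Matrix.of fun a b : Fin l =>
    pz ((lam a : ℤ) - ((a : ℕ) : ℤ) + ((b : ℕ) : ℤ)))

def pad {l : ℕ} (lam : Fin l → ℕ) (a : ℕ) : ℕ := if h : a < l then lam ⟨a, h⟩ else 0

/-- A partition: an antitone, eventually-zero sequence of naturals
(`toFun a` is `λ_{a+1}`, i.e. 0-indexed). -/
structure Ptn where
  toFun : ℕ → ℕ
  anti : ∀ i j : ℕ, i ≤ j → toFun j ≤ toFun i
  bdd : ∃ N, toFun N = 0

/-- The length (number of nonzero parts) of a partition. -/
noncomputable def Ptn.len (μ : Ptn) : ℕ := Nat.find μ.bdd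

/-- The Schur function of a partition. -/
noncomputable def Ptn.schurP (μ : Ptn) : MvPolynomial ℕ ℂ :=
  schur (fun a : Fin μ.len => μ.toFun a)

/-- `λ < μ` in the componentwise order, `λ` given as a finite tuple padded by zeros. -/
def PtnGt {l : ℕ} (lam : Fin l → ℕ) (μ : Ptn) : Prop :=
  (∀ i, pad lam i ≤ μ.toFun i) ∧ (∃ i, pad lam i ≠ μ.toFun i)

/-- The coefficients (as a formal power series in `t`) of
`τ(t) = s_λ(t) + Σ_{λ<μ} ξ_μ s_μ(t)`. -/
noncomputable def tauCoeff {l : ℕ} (lam : Fin l → ℕ) (ξ : Ptn → ℂ) (β : ℕ →₀ ℕ) : ℂ :=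
  MvPolynomial.coeff β (schur lam)
    + ∑ᶠ (μ : Ptn) (_ : PtnGt lam μ), ξ μ * MvPolynomial.coeff β μ.schurP

/-- The coefficients of
`τ^{(k)}(t) = s_{(λ_1,...,λ_k)}(t) + Σ_μ ξ_μ s_{(μ_1,...,μ_k)}(t)`,
the sum over partitions `μ` with `λ < μ` and `μ_i = λ_i` for `i ≥ k+1`. -/
noncomputable def tauKCoeff {l : ℕ} (lam : Fin l → ℕ) (ξ : Ptn → ℂ) (k : ℕ)
    (β : ℕ →₀ ℕ) : ℂ :=
  MvPolynomial.coeff β (schur (fun a : Fin k => pad lam a))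
    + ∑ᶠ (μ : Ptn) (_ : PtnGt lam μ ∧ ∀ i, k ≤ i → μ.toFun i = pad lam i),
        ξ μ * MvPolynomial.coeff β (schur (fun a : Fin k => μ.toFun a))

/-- Formal partial derivative `∂_i` on coefficient functions of power series in `t`. -/
noncomputable def pdCoeff (i : ℕ) (F : (ℕ →₀ ℕ) → ℂ) (β : ℕ →₀ ℕ) : ℂ :=
  ((β i : ℕ) + 1 : ℂ) * F (β + Finsupp.single i 1)

/-- Iterated formal derivative `∂_{i_1} ⋯ ∂_{i_r}` for `L = [i_1,...,i_r]`. -/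
noncomputable def derivsCoeff (L : List ℕ) (F : (ℕ →₀ ℕ) → ℂ) : (ℕ →₀ ℕ) → ℂ :=
  L.foldr pdCoeff F

/-- The power sum `(x_1^n + ⋯ + x_k^n)/n`. -/
noncomputable def psumC (k : ℕ) (n : ℕ) : MvPolynomial (Fin k) ℂ :=
  (n : ℂ)⁻¹ • ∑ i : Fin k, X i ^ n

/-- The coefficient of the monomial `γ` (in `x_1,...,x_k`) of a formal series in `t`
(given by its coefficient function `F`) after the substitution `t_n ↦ (x_1^n+⋯+x_k^n)/n`. -/
noncomputable def evalPS (k : ℕ) (F : (ℕ →₀ ℕ) → ℂ) (γ : Fin k →₀ ℕ) : ℂ :=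
  ∑ᶠ β : (ℕ →₀ ℕ), F β * MvPolynomial.coeff γ (∏ n ∈ β.support, psumC k n ^ β n)

/-!
By Taylor's formula, `∂_1^N P` at `t = [x_1] + ⋯ + [x_k]` is `N!` times the coefficient of `s^N` in
`P([x_1] + ⋯ + [x_k] + (s, 0, 0, …))`. At that point the generating series of the polynomials `p_n`
is `e^{s z} / ∏ (1 - x_i z)`. Multiplying it by `∏ (1 - x_i z)`, a polynomial of degree `k` in `z`
with constant term `1`, is a unitriangular operation on the columns of the determinant `s_μ`, and
it turns every column beyond the `k`-th one into monomials `s^n / n!`. Consequently the lowest power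
of `s` in `s_μ` is `s^{μ_{k+1} + μ_{k+2} + ⋯}`, and its coefficient is `s_{(μ_1, …, μ_k)}` times the
determinant of the numbers `1 / (w_i - j)!`, which is a Vandermonde determinant divided by `∏ w_i!`.

A partition `μ > λ` whose tail differs from that of `λ` has a larger tail, so `∂_1^N s_μ` vanishes
at `[x_1] + ⋯ + [x_k]`. Since Schur functions are homogeneous, only finitely many `μ` contribute to
a given monomial in the `x_i`, and the infinite sums can be treated term by term.
-/

/-! ### Power series -/

section PowerSeries

variable {R : Type*} [CommRing R]

theorem derivative_one_sub_C_mul_X (x : R) :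
    PowerSeries.derivative R (1 - PowerSeries.C x * PowerSeries.X) =
      -(PowerSeries.mk (fun n => x ^ (n + 1)) * (1 - PowerSeries.C x * PowerSeries.X)) := by
  ext n
  rw [mul_sub, mul_one, mul_left_comm]
  cases n with
  | zero => simp
  | succ n => simp [PowerSeries.coeff_succ_mul_X, pow_succ']

theorem derivative_prod_one_sub_C_mul_X {ι : Type*} (s : Finset ι) (x : ι → R) :
    PowerSeries.derivative R (∏ i ∈ s, (1 - PowerSeries.C (x i) * PowerSeries.X)) =
      -(PowerSeries.mk (fun n => ∑ i ∈ s, x i ^ (n + 1)) *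
        ∏ i ∈ s, (1 - PowerSeries.C (x i) * PowerSeries.X)) := by
  classical
  induction s using Finset.induction_on with
  | empty => ext n; simp
  | insert a s ha ih =>
    have hsum : PowerSeries.mk (fun n => ∑ i ∈ insert a s, x i ^ (n + 1)) =
        PowerSeries.mk (fun n => x a ^ (n + 1)) +
          PowerSeries.mk (fun n => ∑ i ∈ s, x i ^ (n + 1)) := by
      ext n; simp [Finset.sum_insert ha]
    rw [Finset.prod_insert ha, Derivation.leibniz, ih, derivative_one_sub_C_mul_X, hsum]
    simp only [smul_eq_mul]
    ring

theorem derivative_powerSeries_map {S : Type*} [CommRing S] (φ : R →+* S) (f : PowerSeries R) :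
    PowerSeries.derivative S (PowerSeries.map φ f) =
      PowerSeries.map φ (PowerSeries.derivative R f) := by
  ext n
  simp [PowerSeries.coeff_derivative]

theorem eq_rescale_exp_of_derivative_eq [Algebra ℚ R] [IsAddTorsionFree R] {s : R}
    {f : PowerSeries R} (hd : PowerSeries.derivative R f = PowerSeries.C s * f)
    (hc : PowerSeries.constantCoeff f = 1) :
    f = PowerSeries.rescale s (PowerSeries.exp R) := by
  ext n
  induction n with
  | zero => simpa using hc
  | succ n ih =>
    have hf := congrArg (PowerSeries.coeff n) hd
    have he := congrArg (PowerSeries.coeff n) (PowerSeries.derivative_exp (A := R))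
    simp only [PowerSeries.coeff_derivative, PowerSeries.coeff_C_mul] at hf he
    have hn : (n + 1) • PowerSeries.coeff (n + 1) f =
        (n + 1) • PowerSeries.coeff (n + 1) (PowerSeries.rescale s (PowerSeries.exp R)) := by
      simp only [nsmul_eq_mul, Nat.cast_add, Nat.cast_one, PowerSeries.coeff_rescale, pow_succ]
        at ih ⊢
      linear_combination hf - s ^ (n + 1) * he + s * ih
    exact nsmul_right_injective n.succ_ne_zero hn

end PowerSeries

/-! ### The generating series of the polynomials `pS` -/

/-- The series `∑_{n ≥ 1} t_n z^n` of the time variables; its exponential is the generating series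
of the polynomials `pS`. -/
noncomputable def timeSeries : PowerSeries (MvPolynomial ℕ ℂ) :=
  PowerSeries.mk fun n => if n = 0 then 0 else X n

theorem constantCoeff_timeSeries : PowerSeries.constantCoeff timeSeries = 0 := by
  simp [timeSeries, ← PowerSeries.coeff_zero_eq_constantCoeff_apply]

theorem coeff_timeSeries_pow (n m : ℕ) :
    PowerSeries.coeff n (timeSeries ^ m) =
      ∑ c : Fin m → Fin (n + 1) with (∑ j, (c j : ℕ)) = n ∧ ∀ j, 1 ≤ (c j : ℕ),
        ∏ j, X (c j : ℕ) := by
  classical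
  rw [← Fin.prod_const m timeSeries, PowerSeries.coeff_prod]
  symm
  refine Finset.sum_of_injOn
    (fun c => Finsupp.equivFunOnFinite.symm fun j => (c j : ℕ)) ?_ ?_ ?_ ?_
  · intro c _ c' _ h
    ext j
    exact DFunLike.congr_fun h j
  · intro c hc
    simp only [Finset.mem_coe, Finset.mem_filter, Finset.mem_univ, true_and] at hc
    simpa [Finset.mem_finsuppAntidiag] using hc.1
  · intro d hd hdc
    rw [Finset.mem_finsuppAntidiag] at hd
    have hle (j : Fin m) : d j < n + 1 :=
      Nat.lt_succ_of_le (hd.1 ▸ Finset.single_le_sum (fun _ _ => Nat.zero_le _) (Finset.mem_univ j))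
    obtain ⟨j, hj⟩ : ∃ j, d j = 0 := by
      by_contra! hpos
      refine hdc ⟨fun j => ⟨d j, hle j⟩, ?_, by ext; rfl⟩
      simpa [Nat.one_le_iff_ne_zero] using ⟨hd.1, hpos⟩
    exact Finset.prod_eq_zero (Finset.mem_univ j) (by simp [timeSeries, hj])
  · intro c hc
    refine Finset.prod_congr rfl fun j _ => ?_
    have hj : (c j : ℕ) ≠ 0 := Nat.one_le_iff_ne_zero.mp ((Finset.mem_filter.mp hc).2.2 j)
    simp [timeSeries, hj]

theorem mk_pS : PowerSeries.mk pS = (PowerSeries.exp (MvPolynomial ℕ ℂ)).subst timeSeries := by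
  ext1 n
  have hzero (m : ℕ) (hm : n < m) : PowerSeries.coeff n (timeSeries ^ m) = 0 :=
    PowerSeries.X_pow_dvd_iff.mp
      (pow_dvd_pow_of_dvd (PowerSeries.X_dvd_iff.mpr constantCoeff_timeSeries) m) n hm
  rw [PowerSeries.coeff_subst' (.of_constantCoeff_zero' constantCoeff_timeSeries),
    finsum_eq_sum_of_support_subset (s := Finset.range (n + 1)), PowerSeries.coeff_mk, pS]
  · refine Finset.sum_congr rfl fun m _ => ?_
    rw [coeff_timeSeries_pow, PowerSeries.coeff_exp, smul_eq_C_mul, smul_eq_mul]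
    congr 1
    simp
  · intro m hm
    by_contra hmn
    exact hm (by simp [hzero m (by simpa using hmn)])

theorem derivative_mk_pS :
    PowerSeries.derivative _ (PowerSeries.mk pS) =
      PowerSeries.mk pS * PowerSeries.derivative _ timeSeries := by
  rw [mk_pS, PowerSeries.derivative_subst (.of_constantCoeff_zero' constantCoeff_timeSeries),
    PowerSeries.derivative_exp]

theorem pS_zero : pS 0 = 1 := by
  simp [pS]

theorem map_mk_pS_mul_prod {ι A : Type*} [Fintype ι] [CommRing A] [Algebra ℚ A]
    [IsAddTorsionFree A] (φ : MvPolynomial ℕ ℂ →+* A) (x : ι → A) (s : A)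
    (hφ : ∀ n : ℕ, φ (X (n + 1)) * (n + 1) = (∑ i, x i ^ (n + 1)) + if n = 0 then s else 0) :
    PowerSeries.map φ (PowerSeries.mk pS) * ∏ i, (1 - PowerSeries.C (x i) * PowerSeries.X) =
      PowerSeries.rescale s (PowerSeries.exp A) := by
  have htime : PowerSeries.map φ (PowerSeries.derivative _ timeSeries) =
      PowerSeries.mk (fun n => ∑ i, x i ^ (n + 1)) + PowerSeries.C s := by
    ext n
    simp [PowerSeries.coeff_derivative, timeSeries, hφ, PowerSeries.coeff_C]
  apply eq_rescale_exp_of_derivative_eq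
  · rw [Derivation.leibniz, derivative_prod_one_sub_C_mul_X, derivative_powerSeries_map,
      derivative_mk_pS, map_mul, htime]
    simp only [smul_eq_mul]
    ring
  · have hconst : PowerSeries.constantCoeff (PowerSeries.map φ (PowerSeries.mk pS)) = 1 := by
      rw [← PowerSeries.coeff_zero_eq_constantCoeff_apply, PowerSeries.coeff_map,
        PowerSeries.coeff_mk, pS_zero, map_one]
    simp [map_prod, hconst]

/-! ### Translating one variable -/

section Shift

variable {R A σ : Type*} [CommSemiring R] [CommSemiring A] [Algebra R A] [DecidableEq σ]

/-- Evaluation at the point `f`, translated in the direction `i` by the polynomial variable. The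
powers of that variable record the derivatives in the direction `i` at `f`. -/
noncomputable def shiftHom (f : σ → A) (i : σ) : MvPolynomial σ R →ₐ[R] Polynomial A :=
  aeval fun j => Polynomial.C (f j) + if j = i then Polynomial.X else 0

theorem derivative_shiftHom (f : σ → A) (i : σ) (P : MvPolynomial σ R) :
    Polynomial.derivative (shiftHom f i P) = shiftHom f i (pderiv i P) := by
  induction P using MvPolynomial.induction_on with
  | C a => simp [shiftHom, Polynomial.algebraMap_apply]
  | add p q hp hq => simp only [map_add, hp, hq]
  | mul_X p j hp =>
    have hX : Polynomial.derivative (shiftHom f i (X j : MvPolynomial σ R)) =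
        shiftHom f i (pderiv i (X j : MvPolynomial σ R)) := by
      simp only [shiftHom, aeval_X, pderiv_X, Pi.single_apply, map_add, Polynomial.derivative_C,
        zero_add]
      split_ifs <;> simp
    simp only [map_mul, Polynomial.derivative_mul, pderiv_mul, map_add, hp, hX]

theorem iterate_derivative_shiftHom (f : σ → A) (i : σ) (N : ℕ) (P : MvPolynomial σ R) :
    Polynomial.derivative^[N] (shiftHom f i P) = shiftHom f i ((pderiv i)^[N] P) :=
  (Function.Semiconj.iterate_right (fun P => (derivative_shiftHom f i P).symm) N P).symm

theorem coeff_zero_shiftHom (f : σ → A) (i : σ) (P : MvPolynomial σ R) :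
    (shiftHom f i P).coeff 0 = aeval f P := by
  induction P using MvPolynomial.induction_on with
  | C a => simp [shiftHom, Polynomial.algebraMap_apply]
  | add p q hp hq => simp only [map_add, Polynomial.coeff_add, hp, hq]
  | mul_X p j hp =>
    have hX : (shiftHom f i (X j : MvPolynomial σ R)).coeff 0 = f j := by
      simp only [shiftHom, aeval_X]
      split_ifs <;> simp
    rw [map_mul, map_mul, Polynomial.mul_coeff_zero, hp, hX, aeval_X]

theorem aeval_iterate_pderiv (f : σ → A) (i : σ) (N : ℕ) (P : MvPolynomial σ R) :
    aeval f ((pderiv i)^[N] P) = N.factorial • (shiftHom f i P).coeff N := by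
  rw [← coeff_zero_shiftHom f i, ← iterate_derivative_shiftHom, Polynomial.coeff_iterate_derivative,
    zero_add, Nat.descFactorial_self]

end Shift

/-! ### Column operations on determinants of Laurent coefficients -/

section ColumnOperations

open scoped LaurentSeries

variable {A : Type*} [CommRing A]

theorem coeff_mul_coe_polynomial (h : A⸨X⸩) {E : Polynomial A} {j : ℕ} (hE : E.natDegree ≤ j)
    (n : ℤ) :
    (h * ((E : PowerSeries A) : A⸨X⸩)).coeff (n + j) =
      ∑ i ∈ Finset.range (j + 1), h.coeff (n + i) * E.coeff (j - i) := by
  have hsum : ((E : PowerSeries A) : A⸨X⸩) =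
      ∑ r ∈ Finset.range (j + 1), HahnSeries.single (r : ℤ) (E.coeff r) := by
    conv_lhs => rw [E.as_sum_range' (j + 1) (Nat.lt_succ_of_le hE)]
    rw [← Polynomial.coeToPowerSeries.ringHom_apply, map_sum, map_sum]
    refine Finset.sum_congr rfl fun r _ => ?_
    rw [Polynomial.coeToPowerSeries.ringHom_apply, ← Polynomial.C_mul_X_pow_eq_monomial]
    simp
  rw [hsum, Finset.mul_sum, HahnSeries.coeff_sum, ← Finset.sum_range_reflect]
  refine Finset.sum_congr rfl fun i hi => ?_
  have hij : i ≤ j := Nat.lt_succ_iff.mp (Finset.mem_range.mp hi)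
  rw [HahnSeries.coeff_mul_single, Nat.add_sub_cancel, Nat.cast_sub hij]
  congr 2
  ring

/-- Right multiplication by this matrix replaces every column `j ≥ k` by the combination of the
columns `i ≤ j` with coefficients `E.coeff (j - i)`. -/
def columnOps (E : Polynomial A) (k m : ℕ) : Matrix (Fin m) (Fin m) A :=
  Matrix.of fun i j => if (j : ℕ) < k then (1 : Matrix (Fin m) (Fin m) A) i j
    else if i ≤ j then E.coeff (j - i) else 0

theorem det_columnOps {E : Polynomial A} (hE : E.coeff 0 = 1) (k m : ℕ) :
    (columnOps E k m).det = 1 := by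
  rw [Matrix.det_of_isUpperTriangular]
  · exact Finset.prod_eq_one fun i _ => by simp [columnOps, hE]
  · intro i j (hij : j < i)
    simp [columnOps, hij.ne', hij.not_ge]

theorem det_coeff_eq_det_coeff_mul {E : Polynomial A} {k : ℕ} (hE : E.natDegree ≤ k)
    (hE0 : E.coeff 0 = 1) (h : A⸨X⸩) {m : ℕ} (a : Fin m → ℤ) :
    (Matrix.of fun i j : Fin m => h.coeff (a i + (j : ℕ))).det =
      (Matrix.of fun i j : Fin m =>
        if (j : ℕ) < k then h.coeff (a i + (j : ℕ))
        else (h * ((E : PowerSeries A) : A⸨X⸩)).coeff (a i + (j : ℕ))).det := by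
  rw [← mul_one (Matrix.det _), ← det_columnOps hE0 k m, ← Matrix.det_mul]
  congr 1
  ext i j
  by_cases hj : (j : ℕ) < k
  · simp [Matrix.mul_apply, columnOps, hj, Matrix.one_apply]
  · have hsub : Finset.range ((j : ℕ) + 1) ⊆ Finset.range m :=
      Finset.range_subset_range.mpr j.isLt
    rw [Matrix.of_apply, if_neg hj, coeff_mul_coe_polynomial h (by omega), Matrix.mul_apply]
    simp only [Matrix.of_apply, columnOps, hj, if_false, Fin.le_def]
    rw [Fin.sum_univ_eq_sum_range
      (fun r => h.coeff (a i + r) * if r ≤ (j : ℕ) then E.coeff (j - r) else 0) m,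
      ← Finset.sum_subset hsub]
    · exact Finset.sum_congr rfl fun r hr => by
        rw [if_pos (Nat.lt_succ_iff.mp (Finset.mem_range.mp hr))]
    · intro r _ hr
      rw [if_neg (by simpa [Nat.lt_succ_iff] using hr), mul_zero]

end ColumnOperations

/-! ### The lowest coefficient of a block determinant -/

section BlockDeterminant

variable {A κ ρ : Type*} [CommRing A] [Fintype κ] [Fintype ρ] [DecidableEq κ] [DecidableEq ρ]

/-- Scaling the rows of the lower blocks by `X ^ d i` makes the columns of the right blocks
divisible by `X ^ (d j + n j)`; after division the right upper block vanishes at `X = 0`. -/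
theorem exists_det_eq_X_pow_mul (M : Matrix (κ ⊕ ρ) (κ ⊕ ρ) (Polynomial A)) (d n : ρ → ℕ)
    (β : Matrix ρ ρ A)
    (htop : ∀ a j, Polynomial.X ^ (d j + n j + 1) ∣ M (.inl a) (.inr j))
    (hbot : ∀ i j, Polynomial.X ^ d i * M (.inr i) (.inr j) =
      Polynomial.C (β i j) * Polynomial.X ^ (d j + n j)) :
    ∃ q : Polynomial A, M.det = Polynomial.X ^ (∑ j, n j) * q ∧
      q.coeff 0 = (M.toBlocks₁₁.map (Polynomial.coeff · 0)).det * β.det := by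
  choose T hT using htop
  set M' : Matrix (κ ⊕ ρ) (κ ⊕ ρ) (Polynomial A) :=
    .fromBlocks M.toBlocks₁₁ (.of fun a j => Polynomial.X * T a j)
      (.of fun i b => Polynomial.X ^ d i * M (.inr i) (.inl b)) (β.map Polynomial.C) with hM'
  have hscale : Matrix.diagonal (Sum.elim (fun _ => 1) fun i => Polynomial.X ^ d i) * M =
      M' * Matrix.diagonal (Sum.elim (fun _ => 1) fun j => Polynomial.X ^ (d j + n j)) := by
    ext1 i j
    rw [Matrix.diagonal_mul, Matrix.mul_diagonal]
    rcases i with a | i <;> rcases j with b | j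
    · simp [hM', Matrix.toBlocks₁₁]
    · simp only [hM', Sum.elim_inl, Sum.elim_inr, one_mul, Matrix.fromBlocks_apply₁₂,
        Matrix.of_apply, hT]
      ring
    · simp [hM']
    · simpa [hM'] using hbot i j
  refine ⟨M'.det, ?_, ?_⟩
  · have hdet := congrArg Matrix.det hscale
    simp only [Matrix.det_mul, Matrix.det_diagonal, Fintype.prod_sum_type, Sum.elim_inl,
      Sum.elim_inr, Finset.prod_const_one, one_mul, Finset.prod_pow_eq_pow_sum,
      Finset.prod_mul_distrib, pow_add] at hdet
    refine (Polynomial.monic_X_pow (∑ i, d i)).isRegular.left ?_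
    linear_combination hdet
  · have hzero : (Polynomial.constantCoeff (R := A)).mapMatrix M' =
        .fromBlocks (M.toBlocks₁₁.map (Polynomial.coeff · 0)) 0
          (.of fun i b => (Polynomial.X ^ d i * M (.inr i) (.inl b)).coeff 0) β := by
      ext i j
      rcases i with a | i <;> rcases j with b | j <;> simp [hM']
    rw [← Polynomial.constantCoeff_apply, RingHom.map_det, hzero, Matrix.det_fromBlocks_zero₁₂]

end BlockDeterminant

/-! ### Schur functions after the translation -/

/-- The inverse factorial `1 / n!`, extended by zero to negative integers: the coefficients of the
exponential series, seen as a Laurent series. -/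
noncomputable def invFactorial (n : ℤ) : ℂ := if 0 ≤ n then (n.toNat.factorial : ℂ)⁻¹ else 0

section Schur

open scoped LaurentSeries

theorem map_pz {A : Type*} [CommRing A] (φ : MvPolynomial ℕ ℂ →+* A) (n : ℤ) :
    φ (pz n) = (PowerSeries.map φ (PowerSeries.mk pS) : A⸨X⸩).coeff n := by
  rw [PowerSeries.coeff_coe, pz]
  split_ifs with h h'
  · omega
  · rw [PowerSeries.coeff_map, PowerSeries.coeff_mk]
    congr 2
    omega
  · exact map_zero φ
  · omega

theorem coeff_coe_rescale_exp {A : Type*} [CommRing A] [Algebra ℚ A] [Algebra ℂ A] (s : A)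
    (n : ℤ) :
    ((PowerSeries.rescale s (PowerSeries.exp A) : PowerSeries A) : A⸨X⸩).coeff n =
      algebraMap ℂ A (invFactorial n) * s ^ n.toNat := by
  rw [PowerSeries.coeff_coe, invFactorial]
  by_cases h : n < 0
  · rw [if_pos h, if_neg (not_le.mpr h), map_zero, zero_mul]
  · lift n to ℕ using not_lt.mp h
    have hcast : algebraMap ℚ A (n.factorial : ℚ)⁻¹ = algebraMap ℂ A (n.factorial : ℂ)⁻¹ := by
      simpa using RingHom.congr_fun (Subsingleton.elim (algebraMap ℚ A)
        ((algebraMap ℂ A).comp (algebraMap ℚ ℂ))) (n.factorial : ℚ)⁻¹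
    simp [PowerSeries.coeff_exp, mul_comm, hcast]

theorem psumC_succ_mul (k n : ℕ) :
    psumC k (n + 1) * (n + 1 : MvPolynomial (Fin k) ℂ) = ∑ i, X i ^ (n + 1) := by
  have hn : (n : ℂ) + 1 ≠ 0 := Nat.cast_add_one_ne_zero n
  have hC : (n + 1 : MvPolynomial (Fin k) ℂ) = C ((n : ℂ) + 1) := by simp
  rw [hC, mul_comm, ← smul_eq_C_mul, psumC, smul_smul, Nat.cast_add_one, mul_inv_cancel₀ hn,
    one_smul]

/-- The polynomial `∏ (1 - x_i z)` in `z`. -/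
noncomputable def elemPoly (k : ℕ) : Polynomial (Polynomial (MvPolynomial (Fin k) ℂ)) :=
  ∏ i : Fin k, (1 - Polynomial.C (Polynomial.C (X i)) * Polynomial.X)

theorem natDegree_elemPoly_le (k : ℕ) : (elemPoly k).natDegree ≤ k :=
  (Polynomial.natDegree_prod_le _ _).trans <|
    (Finset.sum_le_card_nsmul _ _ 1 fun i _ => by compute_degree).trans (by simp)

theorem coeff_zero_elemPoly (k : ℕ) : (elemPoly k).coeff 0 = 1 := by
  simp [elemPoly, Polynomial.coeff_zero_prod]

/-- The image of the generating series of the polynomials `pS` under the substitution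
`t ↦ [x_1] + ⋯ + [x_k] + (s, 0, 0, …)`, where `s` is the polynomial variable. -/
noncomputable def shiftSeries (k : ℕ) : PowerSeries (Polynomial (MvPolynomial (Fin k) ℂ)) :=
  PowerSeries.map (shiftHom (psumC k) 1 : MvPolynomial ℕ ℂ →ₐ[ℂ] _) (PowerSeries.mk pS)

theorem shiftHom_pz (k : ℕ) (n : ℤ) :
    shiftHom (psumC k) 1 (pz n) =
      (shiftSeries k : (Polynomial (MvPolynomial (Fin k) ℂ))⸨X⸩).coeff n :=
  map_pz _ n

theorem shiftSeries_mul_elemPoly (k : ℕ) :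
    shiftSeries k * (elemPoly k : PowerSeries (Polynomial (MvPolynomial (Fin k) ℂ))) =
      PowerSeries.rescale Polynomial.X (PowerSeries.exp _) := by
  have hcoe : (elemPoly k : PowerSeries (Polynomial (MvPolynomial (Fin k) ℂ))) =
      ∏ i : Fin k, (1 - PowerSeries.C (Polynomial.C (X i)) * PowerSeries.X) := by
    rw [elemPoly, ← Polynomial.coeToPowerSeries.ringHom_apply, map_prod]
    simp
  rw [hcoe]
  refine map_mk_pS_mul_prod _ _ _ fun n => ?_
  have hX : shiftHom (psumC k) 1 (X (n + 1) : MvPolynomial ℕ ℂ) =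
      Polynomial.C (psumC k (n + 1)) + if n = 0 then Polynomial.X else 0 := by
    simp [shiftHom]
  have hn : (n + 1 : Polynomial (MvPolynomial (Fin k) ℂ)) =
      Polynomial.C (n + 1 : MvPolynomial (Fin k) ℂ) := by simp
  simp only [RingHom.coe_coe, hX, ← map_pow, ← map_sum, ← psumC_succ_mul, map_mul, ← hn]
  rcases n with _ | n <;> simp

theorem shiftHom_schur (k m : ℕ) (μ : ℕ → ℕ) :
    shiftHom (psumC k) 1 (schur fun a : Fin m => μ a) = (Matrix.of fun a b : Fin m =>
      if (b : ℕ) < k then shiftHom (psumC k) 1 (pz ((μ a : ℤ) - (a : ℕ) + (b : ℕ)))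
      else Polynomial.C (C (invFactorial ((μ a : ℤ) - (a : ℕ) + (b : ℕ)))) *
        Polynomial.X ^ ((μ a : ℤ) - (a : ℕ) + (b : ℕ)).toNat).det := by
  have hmat : (shiftHom (psumC k) 1 : MvPolynomial ℕ ℂ →ₐ[ℂ] _).mapMatrix
      (.of fun a b : Fin m => pz ((μ a : ℤ) - (a : ℕ) + (b : ℕ))) = .of fun a b : Fin m =>
        (shiftSeries k : (Polynomial (MvPolynomial (Fin k) ℂ))⸨X⸩).coeff
          ((μ a : ℤ) - (a : ℕ) + (b : ℕ)) :=
    Matrix.ext fun a b => shiftHom_pz k _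
  rw [schur, AlgHom.map_det, hmat,
    det_coeff_eq_det_coeff_mul (natDegree_elemPoly_le k) (coeff_zero_elemPoly k),
    ← PowerSeries.coe_mul, shiftSeries_mul_elemPoly]
  simp only [coeff_coe_rescale_exp, shiftHom_pz]
  rfl

theorem exists_shiftHom_schur_eq (k r : ℕ) {μ : ℕ → ℕ} (hμ : Antitone μ) :
    ∃ q : Polynomial (MvPolynomial (Fin k) ℂ),
      shiftHom (psumC k) 1 (schur fun a : Fin (k + r) => μ a) =
        Polynomial.X ^ (∑ j ∈ Finset.range r, μ (k + j)) * q ∧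
      q.coeff 0 = aeval (psumC k) (schur fun a : Fin k => μ a) *
        C (Matrix.of fun i j : Fin r => invFactorial ((μ (k + i) + j : ℕ) - (i : ℕ))).det := by
  rw [shiftHom_schur, ← Matrix.det_submatrix_equiv_self finSumFinEquiv]
  generalize hM : Matrix.submatrix _ _ _ = M
  have hleft (x : Fin k ⊕ Fin r) (b : Fin k) : M x (.inl b) = shiftHom (psumC k) 1
      (pz ((μ (finSumFinEquiv x) : ℤ) - (finSumFinEquiv x : ℕ) + (b : ℕ))) := by
    simp [← hM]
  have hright (x : Fin k ⊕ Fin r) (j : Fin r) (e : ℤ)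
      (he : e = (μ (finSumFinEquiv x) : ℤ) - (finSumFinEquiv x : ℕ) + (k + j)) :
      M x (.inr j) = Polynomial.C (C (invFactorial e)) * Polynomial.X ^ e.toNat := by
    simp [← hM, he]
  have hminor : (M.toBlocks₁₁.map (Polynomial.coeff · 0)).det =
      aeval (psumC k) (schur fun a : Fin k => μ a) := by
    rw [schur, AlgHom.map_det]
    congr 1
    ext1 a b
    simp [Matrix.toBlocks₁₁, hleft, coeff_zero_shiftHom]
  rw [← hminor, RingHom.map_det, Finset.sum_range]
  refine exists_det_eq_X_pow_mul M (fun i => μ k + i - μ (k + i)) _ _ ?_ ?_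
  · intro a j
    have ha := hμ a.isLt.le
    have hj := hμ (Nat.le_add_right k j)
    rw [hright _ j _ rfl]
    refine Dvd.dvd.mul_left (pow_dvd_pow _ ?_) _
    simp only [finSumFinEquiv_apply_left, Fin.val_castAdd]
    omega
  · intro i j
    have hi := hμ (Nat.le_add_right k i)
    have hj := hμ (Nat.le_add_right k j)
    rw [hright (.inr i) j ((μ (k + i) + j : ℕ) - (i : ℕ)) (by simp; ring), mul_left_comm,
      ← pow_add]
    by_cases he : 0 ≤ ((μ (k + i) + j : ℕ) : ℤ) - (i : ℕ)
    · congr 2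
      omega
    · have hzero : invFactorial ((μ (k + i) + j : ℕ) - (i : ℕ)) = 0 := if_neg he
      simp only [RingHom.mapMatrix_apply, Matrix.map_apply, Matrix.of_apply, hzero, map_zero,
        zero_mul]

end Schur

/-! ### Determinants of inverse factorials -/

theorem invFactorial_sub (w b : ℕ) :
    invFactorial ((w : ℤ) - b) = (w.factorial : ℂ)⁻¹ * (descPochhammer ℂ b).eval (w : ℂ) := by
  rw [descPochhammer_eval_eq_descFactorial, invFactorial]
  have hw : (w.factorial : ℂ) ≠ 0 := Nat.cast_ne_zero.mpr w.factorial_ne_zero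
  split_ifs with h
  · have hb : b ≤ w := by omega
    have hsub : ((w : ℤ) - b).toNat = w - b := by omega
    have hwb : ((w - b).factorial : ℂ) ≠ 0 := Nat.cast_ne_zero.mpr (w - b).factorial_ne_zero
    rw [hsub, eq_inv_mul_iff_mul_eq₀ hw, ← Nat.factorial_mul_descFactorial hb, Nat.cast_mul]
    field_simp
  · rw [Nat.descFactorial_of_lt (by omega), Nat.cast_zero, mul_zero]

theorem det_invFactorial_sub {r : ℕ} (w : Fin r → ℕ) :
    (Matrix.of fun i j : Fin r => invFactorial ((w i : ℤ) - (j : ℕ))).det =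
      (∏ i, ((w i).factorial : ℂ))⁻¹ * ∏ i, ∏ j ∈ Finset.Ioi i, ((w j : ℂ) - w i) := by
  have hfactor : (Matrix.of fun i j : Fin r => invFactorial ((w i : ℤ) - (j : ℕ))) =
      .of fun i j => ((w i).factorial : ℂ)⁻¹ *
        (Matrix.of fun i j : Fin r => (descPochhammer ℂ j).eval (w i : ℂ)) i j :=
    Matrix.ext fun i j => invFactorial_sub (w i) j
  rw [hfactor, Matrix.det_mul_column, ← Matrix.det_eval_matrixOfPolynomials_eq_det_vandermonde
    (fun i => (w i : ℂ)) _ (fun i => descPochhammer_natDegree ℂ i)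
    (fun i => monic_descPochhammer ℂ i), Matrix.det_vandermonde, Finset.prod_inv_distrib]

theorem prod_prod_Ioi_eq_prod_range {M : Type*} [CommMonoid M] (r : ℕ) (f : ℕ → ℕ → M) :
    ∏ i : Fin r, ∏ j ∈ Finset.Ioi i, f i j =
      ∏ j ∈ Finset.range r, ∏ i ∈ Finset.range j, f i j := by
  rw [Finset.prod_range,
    Finset.prod_comm' (t' := Finset.univ) (s' := Finset.Iio) (by simp)]
  refine Finset.prod_congr rfl fun j _ => ?_
  rw [← Nat.Iio_eq_range, ← Fin.map_valEmbedding_Iio, Finset.prod_map]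
  rfl

theorem det_invFactorial_add_sub (r : ℕ) (μ : ℕ → ℕ) :
    (Matrix.of fun i j : Fin r => invFactorial ((μ i + j : ℕ) - (i : ℕ))).det =
      (∏ i ∈ Finset.range r, ((μ (r - 1 - i) + i).factorial : ℂ))⁻¹ *
        ∏ j ∈ Finset.range r, ∏ i ∈ Finset.range j,
          (((μ (r - 1 - j) + j : ℕ) : ℂ) - ((μ (r - 1 - i) + i : ℕ) : ℂ)) := by
  rw [← prod_prod_Ioi_eq_prod_range r fun i j =>
      (((μ (r - 1 - j) + j : ℕ) : ℂ) - ((μ (r - 1 - i) + i : ℕ) : ℂ)),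
    Finset.prod_range, ← det_invFactorial_sub fun i : Fin r => μ (r - 1 - i) + i,
    ← Matrix.det_submatrix_equiv_self Fin.revPerm]
  congr 1
  ext i j
  have hrev : r - ((i : ℕ) + 1) = r - 1 - i := by omega
  simp only [Matrix.submatrix_apply, Matrix.of_apply, Fin.revPerm_apply, Fin.val_rev, hrev]
  congr 1
  push_cast
  omega

/-! ### Derivatives of Schur functions at `[x_1] + ⋯ + [x_k]` -/

/-- The constant `c'_{λ,k}` of the theorem in terms of the tail `ν = (λ_{k+1}, …, λ_{k+r})`; the
strictly increasing sequence `w` of the paper is `w_{i+1} = ν (r - 1 - i) + i`. -/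
noncomputable def tailConst (ν : ℕ → ℕ) (r : ℕ) : ℂ :=
  ((∑ i ∈ Finset.range r, ν i).factorial : ℂ)
      / (∏ i ∈ Finset.range r, ((ν (r - 1 - i) + i).factorial : ℂ))
    * ∏ j ∈ Finset.range r, ∏ i ∈ Finset.range j,
        (((ν (r - 1 - j) + j : ℕ) : ℂ) - ((ν (r - 1 - i) + i : ℕ) : ℂ))

theorem tailConst_eq_factorial_mul_det (ν : ℕ → ℕ) (r : ℕ) :
    tailConst ν r = ((∑ i ∈ Finset.range r, ν i).factorial : ℂ) *
      (Matrix.of fun i j : Fin r => invFactorial ((ν i + j : ℕ) - (i : ℕ))).det := by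
  rw [det_invFactorial_add_sub, tailConst, div_eq_mul_inv, mul_assoc]

section

variable {k r N : ℕ} {μ : ℕ → ℕ}

theorem aeval_iterate_pderiv_schur_of_lt (hμ : Antitone μ)
    (hN : N < ∑ i ∈ Finset.range r, μ (k + i)) :
    aeval (psumC k) ((pderiv 1)^[N] (schur fun a : Fin (k + r) => μ a)) = 0 := by
  obtain ⟨q, hq, -⟩ := exists_shiftHom_schur_eq k r hμ
  rw [aeval_iterate_pderiv, hq, Polynomial.coeff_X_pow_mul', if_neg hN.not_ge, smul_zero]

theorem aeval_iterate_pderiv_schur_of_eq (hμ : Antitone μ)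
    (hN : N = ∑ i ∈ Finset.range r, μ (k + i)) :
    aeval (psumC k) ((pderiv 1)^[N] (schur fun a : Fin (k + r) => μ a)) =
      C (tailConst (fun i => μ (k + i)) r) *
        aeval (psumC k) (schur fun a : Fin k => μ a) := by
  obtain ⟨q, hq, hq0⟩ := exists_shiftHom_schur_eq k r hμ
  rw [aeval_iterate_pderiv, hq, hN, Polynomial.coeff_X_pow_mul', if_pos le_rfl, Nat.sub_self, hq0,
    tailConst_eq_factorial_mul_det, C_mul, map_natCast, nsmul_eq_mul]
  ring

end

/-! ### Homogeneity -/

theorem isWeightedHomogeneous_det {σ R M n : Type*} [CommRing R] [AddCommMonoid M] [Fintype n]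
    [DecidableEq n] {w : σ → M} {A : Matrix n n (MvPolynomial σ R)} {d e : n → M}
    (hA : ∀ i j, IsWeightedHomogeneous w (A i j) (d i + e j)) :
    IsWeightedHomogeneous w A.det (∑ i, d i + ∑ j, e j) := by
  rw [Matrix.det_apply']
  refine IsWeightedHomogeneous.sum _ _ _ fun σ _ => ?_
  rw [← map_intCast (C : R →+* MvPolynomial _ R), ← Equiv.sum_comp σ d, ← Finset.sum_add_distrib]
  exact (IsWeightedHomogeneous.prod _ _ _ fun i _ => hA (σ i) i).C_mul _

/-- The weight of a monomial in `t`, the variable `t_n` having weight `n`. It takes values in `ℤ`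
because the polynomials `pz` are indexed by integers. -/
noncomputable abbrev timeWeight : (ℕ →₀ ℕ) →+ ℤ := Finsupp.weight ((↑) : ℕ → ℤ)

theorem isWeightedHomogeneous_pS (n : ℕ) : IsWeightedHomogeneous ((↑) : ℕ → ℤ) (pS n) n := by
  refine IsWeightedHomogeneous.sum _ _ _ fun m _ => ?_
  rw [smul_eq_C_mul]
  refine IsWeightedHomogeneous.C_mul (IsWeightedHomogeneous.sum _ _ _ fun c hc => ?_) _
  have hn : (n : ℤ) = ∑ j, ((c j : ℕ) : ℤ) := by
    rw [← Nat.cast_sum, (Finset.mem_filter.mp hc).2.1]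
  rw [hn]
  exact IsWeightedHomogeneous.prod _ _ _ fun j _ => isWeightedHomogeneous_X ℂ _ _

theorem isWeightedHomogeneous_pz (n : ℤ) : IsWeightedHomogeneous ((↑) : ℕ → ℤ) (pz n) n := by
  unfold pz
  split_ifs with h
  · simpa [h] using isWeightedHomogeneous_pS n.toNat
  · exact isWeightedHomogeneous_zero ℂ _ _

theorem isWeightedHomogeneous_schur {m : ℕ} (μ : Fin m → ℕ) :
    IsWeightedHomogeneous ((↑) : ℕ → ℤ) (schur μ) (∑ a, μ a : ℕ) := by
  have hsum : ((∑ a, μ a : ℕ) : ℤ) = ∑ a, ((μ a : ℤ) - (a : ℕ)) + ∑ b : Fin m, ((b : ℕ) : ℤ) := by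
    rw [Finset.sum_sub_distrib, sub_add_cancel, Nat.cast_sum]
  rw [hsum]
  exact isWeightedHomogeneous_det fun a b => isWeightedHomogeneous_pz _

theorem isHomogeneous_psumC (k n : ℕ) : (psumC k n).IsHomogeneous n := by
  rw [psumC, smul_eq_C_mul]
  exact (IsHomogeneous.sum _ _ _ fun i _ => isHomogeneous_X_pow i n).C_mul _

theorem timeWeight_eq_degree_of_coeff_prod_ne_zero {k : ℕ} {γ : Fin k →₀ ℕ} {β : ℕ →₀ ℕ}
    (h : coeff γ (∏ n ∈ β.support, psumC k n ^ β n) ≠ 0) : timeWeight β = γ.degree := by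
  have hdegree : γ.degree = ∑ n ∈ β.support, n * β n := by
    by_contra hne
    exact h ((IsHomogeneous.prod _ _ _ fun n _ =>
      (isHomogeneous_psumC k n).pow (β n)).coeff_eq_zero hne)
  simp [hdegree, Finsupp.weight_apply, Finsupp.sum, mul_comm]

/-! ### Evaluation of coefficient functions -/

section EvalPS

variable {k N : ℕ} {γ : Fin k →₀ ℕ}

theorem evalPS_congr {F G : (ℕ →₀ ℕ) → ℂ} (h : ∀ β, timeWeight β = γ.degree → F β = G β) :
    evalPS k F γ = evalPS k G γ := by
  refine finsum_congr fun β => ?_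
  by_cases hβ : coeff γ (∏ n ∈ β.support, psumC k n ^ β n) = 0
  · rw [hβ, mul_zero, mul_zero]
  · rw [h β (timeWeight_eq_degree_of_coeff_prod_ne_zero hβ)]

theorem evalPS_coeff (P : MvPolynomial ℕ ℂ) (γ : Fin k →₀ ℕ) :
    evalPS k (fun β => coeff β P) γ = coeff γ (aeval (psumC k) P) := by
  rw [evalPS, finsum_eq_sum_of_support_subset (s := P.support), aeval_def, eval₂_eq, coeff_sum]
  · simp only [algebraMap_eq, coeff_C_mul]
  · intro β hβ
    rw [Finset.mem_coe, mem_support_iff]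
    exact left_ne_zero_of_mul hβ

theorem derivsCoeff_replicate_coeff (i N : ℕ) (P : MvPolynomial ℕ ℂ) :
    derivsCoeff (List.replicate N i) (fun β => coeff β P) =
      fun β => coeff β ((pderiv i)^[N] P) := by
  induction N with
  | zero => rfl
  | succ N ih =>
    rw [derivsCoeff] at ih
    rw [derivsCoeff, List.replicate_succ, List.foldr_cons, ih, Function.iterate_succ_apply']
    funext β
    rw [pdCoeff, coeff_pderiv, mul_comm]

theorem derivsCoeff_replicate_congr {i : ℕ} {F G : (ℕ →₀ ℕ) → ℂ} {β : ℕ →₀ ℕ}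
    (h : F (β + Finsupp.single i N) = G (β + Finsupp.single i N)) :
    derivsCoeff (List.replicate N i) F β = derivsCoeff (List.replicate N i) G β := by
  induction N generalizing β with
  | zero => simpa [derivsCoeff] using h
  | succ N ih =>
    have hstep : derivsCoeff (List.replicate N i) F (β + Finsupp.single i 1) =
        derivsCoeff (List.replicate N i) G (β + Finsupp.single i 1) :=
      ih (by rwa [add_assoc, ← Finsupp.single_add, Nat.add_comm 1 N])
    exact congrArg (((β i : ℂ) + 1) * ·) hstep

theorem evalPS_derivsCoeff_congr {F G : (ℕ →₀ ℕ) → ℂ}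
    (h : ∀ β, timeWeight β = γ.degree + N → F β = G β) :
    evalPS k (derivsCoeff (List.replicate N 1) F) γ =
      evalPS k (derivsCoeff (List.replicate N 1) G) γ := by
  refine evalPS_congr fun β hβ => derivsCoeff_replicate_congr (h _ ?_)
  rw [map_add, hβ, Finsupp.weight_single]
  simp

theorem evalPS_derivsCoeff_coeff (N : ℕ) (P : MvPolynomial ℕ ℂ) (γ : Fin k →₀ ℕ) :
    evalPS k (derivsCoeff (List.replicate N 1) fun β => coeff β P) γ =
      coeff γ (aeval (psumC k) ((pderiv 1)^[N] P)) := by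
  rw [derivsCoeff_replicate_coeff, evalPS_coeff]

theorem coeff_aeval_iterate_pderiv_eq_zero {P : MvPolynomial ℕ ℂ} {d : ℤ}
    (hP : IsWeightedHomogeneous ((↑) : ℕ → ℤ) P d) (hd : d ≠ γ.degree + N) :
    coeff γ (aeval (psumC k) ((pderiv 1)^[N] P)) = 0 := by
  rw [← evalPS_derivsCoeff_coeff, evalPS_derivsCoeff_congr (G := fun β => coeff β 0)
    fun β hβ => (hP.coeff_eq_zero β (hβ.trans_ne hd.symm)).trans (coeff_zero β).symm,
    evalPS_derivsCoeff_coeff, iterate_map_zero, map_zero, coeff_zero]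

theorem evalPS_derivsCoeff_coeff_add_finsum {ι : Type*} {p : ι → Prop} {d : ι → ℕ}
    {Q : ι → MvPolynomial ℕ ℂ} (hQ : ∀ i, IsWeightedHomogeneous ((↑) : ℕ → ℤ) (Q i) (d i))
    (hfin : ∀ n, {i | p i ∧ d i = n}.Finite) (P : MvPolynomial ℕ ℂ) (a : ι → ℂ) (N : ℕ)
    (γ : Fin k →₀ ℕ) :
    evalPS k (derivsCoeff (List.replicate N 1) fun β =>
        coeff β P + ∑ᶠ (i) (_ : p i), a i * coeff β (Q i)) γ =
      coeff γ (aeval (psumC k) ((pderiv 1)^[N] P)) +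
        ∑ᶠ (i) (_ : p i), a i * coeff γ (aeval (psumC k) ((pderiv 1)^[N] (Q i))) := by
  set S := (hfin (γ.degree + N)).toFinset
  have hS {i} (hi : (d i : ℤ) = γ.degree + N) : p i ↔ i ∈ S := by
    have hi' : d i = γ.degree + N := mod_cast hi
    simp [S, hi']
  have hsource (β) (hβ : timeWeight β = γ.degree + N) :
      coeff β P + ∑ᶠ (i) (_ : p i), a i * coeff β (Q i) = coeff β (P + ∑ i ∈ S, a i • Q i) := by
    rw [finsum_cond_eq_sum_of_cond_iff _ fun hne =>
      hS ((hQ _ (right_ne_zero_of_mul hne)).symm.trans hβ)]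
    simp only [coeff_add, coeff_sum, coeff_smul, smul_eq_mul]
  have htarget : ∑ᶠ (i) (_ : p i), a i * coeff γ (aeval (psumC k) ((pderiv 1)^[N] (Q i))) =
      ∑ i ∈ S, a i * coeff γ (aeval (psumC k) ((pderiv 1)^[N] (Q i))) :=
    finsum_cond_eq_sum_of_cond_iff _ fun hne => hS <| by
      contrapose! hne
      rw [coeff_aeval_iterate_pderiv_eq_zero (hQ _) hne, mul_zero]
  rw [evalPS_derivsCoeff_congr hsource, evalPS_derivsCoeff_coeff, htarget]
  simp only [← Derivation.coeFn_coe, ← Module.End.coe_pow, map_add, map_sum, map_smul, coeff_add,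
    coeff_sum, coeff_smul, smul_eq_mul]

end EvalPS

/-! ### Partitions -/

namespace Ptn

theorem toFun_antitone (μ : Ptn) : Antitone μ.toFun := μ.anti

theorem toFun_eq_zero_iff (μ : Ptn) {i : ℕ} : μ.toFun i = 0 ↔ μ.len ≤ i :=
  ⟨fun h => Nat.find_min' μ.bdd h,
    fun h => Nat.le_zero.mp ((μ.anti _ _ h).trans (Nat.find_spec μ.bdd).le)⟩

theorem len_le_sum (μ : Ptn) : μ.len ≤ ∑ i ∈ Finset.range μ.len, μ.toFun i := by
  simpa using Finset.card_nsmul_le_sum (Finset.range μ.len) μ.toFun 1 fun i hi =>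
    Nat.one_le_iff_ne_zero.mpr (mt μ.toFun_eq_zero_iff.mp (Finset.mem_range.mp hi).not_ge)

theorem finite_setOf_tail_eq_and_sum_eq (k n : ℕ) (f : ℕ → ℕ) :
    {μ : Ptn | (∀ i, k ≤ i → μ.toFun i = f i) ∧ ∑ i ∈ Finset.range k, μ.toFun i = n}.Finite := by
  refine Set.Finite.of_finite_image (f := fun μ (i : Fin k) => μ.toFun i) ?_ ?_
  · refine (Set.finite_Iic fun _ => n).subset ?_
    rintro _ ⟨μ, hμ, rfl⟩ i
    exact (Finset.single_le_sum (f := μ.toFun) (fun _ _ => Nat.zero_le _)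
      (Finset.mem_range.mpr i.2)).trans hμ.2.le
  · rintro ⟨f, _, _⟩ hf ⟨g, _, _⟩ hg h
    congr 1
    funext i
    obtain hi | hi := lt_or_ge i k
    · exact congrFun h ⟨i, hi⟩
    · exact (hf.1 i hi).trans (hg.1 i hi).symm

theorem finite_setOf_sum_eq (n : ℕ) :
    {μ : Ptn | ∑ i ∈ Finset.range μ.len, μ.toFun i = n}.Finite := by
  refine (finite_setOf_tail_eq_and_sum_eq n n 0).subset fun μ hμ => ?_
  have hlen : μ.len ≤ n := μ.len_le_sum.trans hμ.le
  refine ⟨fun i hi => μ.toFun_eq_zero_iff.mpr (hlen.trans hi), ?_⟩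
  exact (Finset.sum_subset (Finset.range_subset_range.mpr hlen) fun i _ hi =>
    μ.toFun_eq_zero_iff.mpr (by simpa using hi)).symm.trans hμ

end Ptn

section PtnGt

variable {l : ℕ} {lam : Fin l → ℕ} {k : ℕ} {μ : Ptn}

theorem pad_eq_zero {i : ℕ} (h : l ≤ i) : pad lam i = 0 := dif_neg h.not_gt

theorem pad_fin (i : Fin l) : pad lam i = lam i := dif_pos i.2

theorem antitone_pad (hanti : Antitone lam) : Antitone (pad lam) := by
  intro i j hij
  obtain hj | hj := lt_or_ge j l
  · rw [pad, pad, dif_pos hj, dif_pos (hij.trans_lt hj)]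
    exact hanti hij
  · rw [pad_eq_zero hj]
    exact Nat.zero_le _

theorem PtnGt.le_len (hμ : PtnGt lam μ) (hpos : ∀ i, 1 ≤ lam i) : l ≤ μ.len := by
  by_contra! hlen
  have hle : pad lam μ.len ≤ 0 := (hμ.1 _).trans_eq (μ.toFun_eq_zero_iff.mpr le_rfl)
  rw [pad, dif_pos hlen] at hle
  exact (hpos _).not_gt (Nat.lt_one_iff.mpr (Nat.le_zero.mp hle))

theorem PtnGt.schurP_eq (hμ : PtnGt lam μ) (hpos : ∀ i, 1 ≤ lam i) (hk : k ≤ l)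
    (htail : ∀ i, k ≤ i → μ.toFun i = pad lam i) :
    μ.schurP = schur fun a : Fin l => μ.toFun a := by
  have hlen : μ.len = l := le_antisymm
    (μ.toFun_eq_zero_iff.mp ((htail l hk).trans (pad_eq_zero le_rfl))) (hμ.le_len hpos)
  rw [Ptn.schurP, hlen]

theorem PtnGt.sum_tail_lt (hμ : PtnGt lam μ) (hlen : l ≤ μ.len)
    (htail : ¬∀ i, k ≤ i → μ.toFun i = pad lam i) :
    ∑ i ∈ Finset.Ico k l, pad lam i < ∑ i ∈ Finset.Ico k μ.len, μ.toFun i := by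
  push Not at htail
  obtain ⟨i, hki, hne⟩ := htail
  have hlt : pad lam i < μ.toFun i := (hμ.1 i).lt_of_ne' hne
  have hi : i < μ.len := by
    by_contra! h
    exact hlt.not_ge ((μ.toFun_eq_zero_iff.mpr h).trans_le (Nat.zero_le _))
  exact (Finset.sum_le_sum_of_subset (Finset.Ico_subset_Ico_right hlen)).trans_lt
    (Finset.sum_lt_sum (fun i _ => hμ.1 i) ⟨i, Finset.mem_Ico.mpr ⟨hki, hi⟩, hlt⟩)

theorem PtnGt.aeval_iterate_pderiv_schurP_eq_zero (hμ : PtnGt lam μ) (hpos : ∀ i, 1 ≤ lam i)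
    (hk : k ≤ l) (htail : ¬∀ i, k ≤ i → μ.toFun i = pad lam i) :
    aeval (psumC k) ((pderiv 1)^[∑ i ∈ Finset.Ico k l, pad lam i] μ.schurP) = 0 := by
  have hlen := hμ.le_len hpos
  have hlt := hμ.sum_tail_lt hlen htail
  obtain ⟨r, hr⟩ := Nat.exists_eq_add_of_le (hk.trans hlen)
  rw [hr, Finset.sum_Ico_eq_sum_range _ k (k + r), Nat.add_sub_cancel_left] at hlt
  rw [Ptn.schurP, hr]
  exact aeval_iterate_pderiv_schur_of_lt μ.toFun_antitone hlt

theorem aeval_iterate_pderiv_schur_of_tail_eq {ν : ℕ → ℕ} (hν : Antitone ν) (hk : k ≤ l)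
    (htail : ∀ i, k ≤ i → ν i = pad lam i) :
    aeval (psumC k) ((pderiv 1)^[∑ i ∈ Finset.Ico k l, pad lam i]
        (schur fun a : Fin l => ν a)) =
      C (tailConst (fun i => pad lam (k + i)) (l - k)) *
        aeval (psumC k) (schur fun a : Fin k => ν a) := by
  have htail' : (fun i => pad lam (k + i)) = fun i => ν (k + i) :=
    funext fun i => (htail _ (Nat.le_add_right k i)).symm
  obtain ⟨r, rfl⟩ := Nat.exists_eq_add_of_le hk
  rw [htail', Finset.sum_Ico_eq_sum_range, Nat.add_sub_cancel_left]
  exact aeval_iterate_pderiv_schur_of_eq hν (Finset.sum_congr rfl fun i _ => congrFun htail' i)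

theorem evalPS_derivsCoeff_tauCoeff (lam : Fin l → ℕ) (ξ : Ptn → ℂ) (N : ℕ)
    (γ : Fin k →₀ ℕ) :
    evalPS k (derivsCoeff (List.replicate N 1) (tauCoeff lam ξ)) γ =
      coeff γ (aeval (psumC k) ((pderiv 1)^[N] (schur lam))) +
        ∑ᶠ (μ : Ptn) (_ : PtnGt lam μ),
          ξ μ * coeff γ (aeval (psumC k) ((pderiv 1)^[N] μ.schurP)) :=
  evalPS_derivsCoeff_coeff_add_finsum (fun _ => isWeightedHomogeneous_schur _)
    (fun n => (Ptn.finite_setOf_sum_eq n).subset fun _ hμ => (Finset.sum_range _).trans hμ.2)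
    _ ξ N γ

theorem evalPS_tauKCoeff (lam : Fin l → ℕ) (ξ : Ptn → ℂ) (γ : Fin k →₀ ℕ) :
    evalPS k (tauKCoeff lam ξ k) γ =
      coeff γ (aeval (psumC k) (schur fun a : Fin k => pad lam a)) +
        ∑ᶠ (μ : Ptn) (_ : PtnGt lam μ ∧ ∀ i, k ≤ i → μ.toFun i = pad lam i),
          ξ μ * coeff γ (aeval (psumC k) (schur fun a : Fin k => μ.toFun a)) :=
  evalPS_derivsCoeff_coeff_add_finsum (fun _ => isWeightedHomogeneous_schur _)
    (fun n => (Ptn.finite_setOf_tail_eq_and_sum_eq k n (pad lam)).subset fun _ hμ =>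
      ⟨hμ.1.2, (Finset.sum_range _).trans hμ.2⟩)
    _ ξ 0 γ

theorem tailConst_pad (lam : Fin l → ℕ) (k : ℕ) :
    tailConst (fun i => pad lam (k + i)) (l - k) =
      ((∑ a ∈ Finset.Ico k l, pad lam a).factorial : ℂ)
          / (∏ i ∈ Finset.range (l - k), ((pad lam (l - 1 - i) + i).factorial : ℂ))
        * ∏ j ∈ Finset.range (l - k), ∏ i ∈ Finset.range j,
            (((pad lam (l - 1 - j) + j : ℕ) : ℂ) - ((pad lam (l - 1 - i) + i : ℕ) : ℂ)) := by
  have hindex {i : ℕ} (hi : i < l - k) : k + (l - k - 1 - i) = l - 1 - i := by omega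
  rw [tailConst, Finset.sum_Ico_eq_sum_range]
  congr 1
  · congr 1
    exact Finset.prod_congr rfl fun i hi => by rw [hindex (Finset.mem_range.mp hi)]
  · refine Finset.prod_congr rfl fun j hj => Finset.prod_congr rfl fun i hi => ?_
    have hj' := Finset.mem_range.mp hj
    rw [hindex hj', hindex ((Finset.mem_range.mp hi).trans hj')]

end PtnGt

/-- Let `λ` be a partition of length `l`, `ξ_μ ∈ ℂ` arbitrary,
`τ(t) = s_λ(t) + Σ_{λ<μ} ξ_μ s_μ(t)` and, for `0 ≤ k ≤ l`,
`τ^{(k)}(t) = s_{(λ_1,...,λ_k)}(t) + Σ_μ ξ_μ s_{(μ_1,...,μ_k)}(t)` (the sum over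
partitions `μ = (μ_1,...,μ_l)` with `λ < μ` and `μ_i = λ_i` for `k+1 ≤ i ≤ l`). Then
`∂_1^{N_{λ,k}} τ` at `t = [x_1]+⋯+[x_k]` equals `c'_{λ,k} · τ^{(k)}([x_1]+⋯+[x_k])`
as formal power series in `x_1,...,x_k`, where
`c'_{λ,k} = (N_{λ,k}! / Π_{i=1}^{l-k} w_i!) · Π_{1≤i<j≤l-k} (w_j - w_i)` with
`(w_l,...,w_1) = (λ_1,...,λ_l) + (l-1,...,1,0)` (so `w_{i+1} = pad lam (l-1-i) + i`). -/
theorem statement19 (l : ℕ) (lam : Fin l → ℕ)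
    (hanti : Antitone lam) (hpos : ∀ i, 1 ≤ lam i)
    (ξ : Ptn → ℂ) (k : ℕ) (hk : k ≤ l)
    (N : ℕ) (hN : N = ∑ a ∈ Finset.Ico k l, pad lam a)
    (c : ℂ)
    (hc : c = (Nat.factorial N : ℂ)
          / (∏ i ∈ Finset.range (l - k), (Nat.factorial (pad lam (l - 1 - i) + i) : ℂ))
        * ∏ j ∈ Finset.range (l - k), ∏ i ∈ Finset.range j,
            (((pad lam (l - 1 - j) + j : ℕ) : ℂ) - ((pad lam (l - 1 - i) + i : ℕ) : ℂ)))
    (γ : Fin k →₀ ℕ) :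
    evalPS k (derivsCoeff (List.replicate N 1) (tauCoeff lam ξ)) γ
      = c * evalPS k (tauKCoeff lam ξ k) γ := by
  classical
  have hc' : c = tailConst (fun i => pad lam (k + i)) (l - k) := by rw [hc, hN, tailConst_pad]
  have hlam : schur lam = schur fun a : Fin l => pad lam a := by simp only [pad_fin]
  rw [evalPS_derivsCoeff_tauCoeff, evalPS_tauKCoeff, hlam, hN,
    aeval_iterate_pderiv_schur_of_tail_eq (antitone_pad hanti) hk fun _ _ => rfl, ← hc',
    coeff_C_mul, mul_add]
  congr 1
  simp only [← smul_eq_mul c, smul_finsum]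
  refine finsum_congr fun μ => ?_
  by_cases hμ : PtnGt lam μ
  · by_cases htail : ∀ i, k ≤ i → μ.toFun i = pad lam i
    · rw [finsum_eq_if, finsum_eq_if, if_pos hμ, if_pos ⟨hμ, htail⟩, hμ.schurP_eq hpos hk htail,
        aeval_iterate_pderiv_schur_of_tail_eq μ.toFun_antitone hk htail, ← hc', coeff_C_mul,
        smul_eq_mul, mul_left_comm]
    · simp only [hμ.aeval_iterate_pderiv_schurP_eq_zero hpos hk htail, htail, coeff_zero, mul_zero,
        finsum_zero, and_false, finsum_false]
  · simp [hμ]
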